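/- Let K be a convex body in ℝ^n with center of mass at the origin. Then vrad(K ∩ (−K)) ≥ (1/2) vrad(K), and more generally, for every orthogonal transformation θ of ℝ^n, vrad(K ∩ θ(K)) ≥ (1/2) · vrad(K)² / w(K). -/

import Mathlib

/-!
The volume estimates rest on the Milman–Pajor inequality `|K| |L| ≤ |K ∩ L| |K - L|`, valid for
convex bodies `K`, `L` with barycentre at the origin (`milman_pajor`). Applied to `L = -K`, where
`K - L = K + K = 2 K`, it gives `vrad(K)² ≤ 2 vrad(K) vrad(K ∩ -K)`, the first claim. Applied to
`L = θ(K)`, it gives `vrad(K)² ≤ vrad(K ∩ θ(K)) vrad(K - θ(K))`; by Urysohn's inequality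
`vrad ≤ w` (`urysohn`), the additivity of support functions and the rotation invariance of the
measure on the sphere, `vrad(K - θ(K)) ≤ w(K - θ(K)) ≤ 2 w(K)` (`meanWidth_sub_le`).

Both inequalities come from the Brunn–Minkowski inequality, obtained from the Prékopa–Leindler
inequality: it holds on `ℝ` by comparing superlevel sets, and it passes to products.

For Milman–Pajor, `f z = |K ∩ (z + L)|` is log-concave by Brunn–Minkowski, so `log f` lies below an
affine function `log (f 0) + φ` (`exists_log_le`). The elementary bound `log τ ≥ 1 - 1 / τ` turns
this into `f - f 0 ≤ f φ` on the support of `f`, which is contained in `K - L`. Integrating,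
`|K| |L| - f 0 |K - L| ≤ ∫ f φ`, and the right-hand side vanishes since the barycentre of `f` is the
difference of those of `K` and `L`.

For Urysohn, Brunn–Minkowski bounds `|Bⁿ + t C|` below by `(1 + t vrad C)ⁿ |Bⁿ|`, while polar
coordinates bound it above by `|Bⁿ| ∫ (1 + t h_C)ⁿ dσ`, where `h_C` is the support function; the
first-order terms at `t = 0` give the inequality.
-/

open MeasureTheory Metric
open scoped RealInnerProductSpace Pointwise

noncomputable section

/-- The uniform probability measure on the unit Euclidean sphere of `ℝ^n`. -/
def sphereUniform (n : ℕ) : Measure (sphere (0 : EuclideanSpace ℝ (Fin n)) 1) :=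
  (((volume : Measure (EuclideanSpace ℝ (Fin n))).toSphere Set.univ)⁻¹) •
    (volume : Measure (EuclideanSpace ℝ (Fin n))).toSphere

/-- The mean width `w(K) = ∫_{S^{n-1}} max_{x ∈ K} ⟪x, u⟫ dσ(u)` of a subset of `ℝ^n`,
with `σ` the uniform probability measure on the unit sphere. -/
def meanWidth {n : ℕ} (K : Set (EuclideanSpace ℝ (Fin n))) : ℝ :=
  ∫ u, sSup ((fun x => ⟪x, (u : EuclideanSpace ℝ (Fin n))⟫) '' K) ∂(sphereUniform n)

/-- The volume radius `vrad(K) = (vol K / vol Bⁿ)^{1/n}` of a subset of `ℝ^n`. -/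
def volRad {n : ℕ} (K : Set (EuclideanSpace ℝ (Fin n))) : ℝ :=
  ((volume K).toReal / (volume (ball (0 : EuclideanSpace ℝ (Fin n)) 1)).toReal) ^ ((n : ℝ)⁻¹)

/-- The center of mass (barycenter) of a subset of `ℝ^n`. -/
def centerOfMass {n : ℕ} (K : Set (EuclideanSpace ℝ (Fin n))) : EuclideanSpace ℝ (Fin n) :=
  (volume K).toReal⁻¹ • ∫ x in K, x ∂volume

end

namespace MilmanPajor
open Set Filter Topology
open scoped ENNReal

/-! ### The Prékopa–Leindler and Brunn–Minkowski inequalities -/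

lemma ennreal_amgm {s t : ℝ} (hs : 0 < s) (ht : 0 < t) (hst : s + t = 1) (a b : ℝ≥0∞) :
    a ^ s * b ^ t ≤ ENNReal.ofReal s * a + ENNReal.ofReal t * b := by
  induction a with
  | top => simp [ENNReal.mul_top, hs]
  | coe a =>
    induction b with
    | top => simp [ENNReal.mul_top, ht]
    | coe b =>
      have h := NNReal.geom_mean_le_arith_mean2_weighted ⟨s, hs.le⟩ ⟨t, ht.le⟩ a b
        (NNReal.eq hst)
      rw [← ENNReal.coe_rpow_of_nonneg _ hs.le, ← ENNReal.coe_rpow_of_nonneg _ ht.le,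
        ENNReal.ofReal_eq_coe_nnreal hs.le, ENNReal.ofReal_eq_coe_nnreal ht.le]
      exact_mod_cast h

lemma volume_affine_image {s : ℝ} (hs : 0 < s) (c : ℝ) (A : Set ℝ) :
    volume ((fun a => s * a + c) '' A) = ENNReal.ofReal s * volume A := by
  have : (fun a => s * a + c) '' A = (fun x => x + c) '' (s • A) := by
    rw [← image_smul, image_image]; rfl
  rw [this, image_add_right, measure_preimage_add_right, Measure.addHaar_smul]
  simp [abs_of_pos hs]

/-- The translates of `s A` and `t B` by `t min B` and `s max A` both lie in `s A + t B` and meet in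
at most one point. -/
lemma bm_one_compact {s t : ℝ} (hs : 0 < s) (ht : 0 < t) {A B C : Set ℝ}
    (hA : IsCompact A) (hB : IsCompact B) (hA0 : A.Nonempty) (hB0 : B.Nonempty)
    (h : ∀ a ∈ A, ∀ b ∈ B, s * a + t * b ∈ C) :
    ENNReal.ofReal s * volume A + ENNReal.ofReal t * volume B ≤ volume C := by
  obtain ⟨a₁, ha₁, hmax⟩ := hA.exists_isGreatest hA0
  obtain ⟨b₀, hb₀, hmin⟩ := hB.exists_isLeast hB0
  rw [← volume_affine_image hs (t * b₀), ← volume_affine_image ht (s * a₁)]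
  rw [← measure_union₀ (hB.image (by fun_prop)).measurableSet.nullMeasurableSet]
  · apply measure_mono
    rintro _ (⟨a, ha, rfl⟩ | ⟨b, hb, rfl⟩)
    · exact h a ha b₀ hb₀
    · simpa [add_comm] using h a₁ ha₁ b hb
  · refine measure_mono_null (t := {s * a₁ + t * b₀}) ?_ (by simp)
    rintro _ ⟨⟨a, ha, rfl⟩, b, hb, hab⟩
    have h1 := hmax ha
    have h2 := hmin hb
    simp only at hab ⊢
    rw [mem_singleton_iff]
    nlinarith

/-- One-dimensional Brunn–Minkowski inequality for measurable sets. -/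
lemma bm_one {s t : ℝ} (hs : 0 < s) (ht : 0 < t) {A B C : Set ℝ}
    (hA : MeasurableSet A) (hB : MeasurableSet B) (hA0 : A.Nonempty) (hB0 : B.Nonempty)
    (h : ∀ a ∈ A, ∀ b ∈ B, s * a + t * b ∈ C) :
    ENNReal.ofReal s * volume A + ENNReal.ofReal t * volume B ≤ volume C := by
  obtain ⟨a₀, ha₀⟩ := hA0
  obtain ⟨b₀, hb₀⟩ := hB0
  rw [hA.measure_eq_iSup_isCompact, hB.measure_eq_iSup_isCompact]
  simp only [ENNReal.mul_iSup, iSup_and']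
  refine ENNReal.biSup_add_biSup_le' (p := fun K => K ⊆ A ∧ IsCompact K)
    (q := fun K => K ⊆ B ∧ IsCompact K) ⟨∅, by simp⟩ ⟨∅, by simp⟩ ?_
  rintro K ⟨hKA, hK⟩ L ⟨hLB, hL⟩
  -- Adjoining one point makes the compact subsets nonempty without changing the estimate.
  calc ENNReal.ofReal s * volume K + ENNReal.ofReal t * volume L
      ≤ ENNReal.ofReal s * volume (insert a₀ K) + ENNReal.ofReal t * volume (insert b₀ L) := by
        gcongr <;> exact subset_insert _ _
    _ ≤ volume C := bm_one_compact hs ht (hK.insert _) (hL.insert _) (insert_nonempty _ _)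
        (insert_nonempty _ _) fun a ha b hb =>
          h a (insert_subset ha₀ hKA ha) b (insert_subset hb₀ hLB hb)

/-- The Prékopa–Leindler inequality on `E` with weights `s` and `t`, for Borel functions with
values in `[0, ∞]`. -/
def PrekopaLeindler (E : Type*) [AddCommGroup E] [Module ℝ E] [MeasureSpace E] (s t : ℝ) : Prop :=
  ∀ f g h : E → ℝ≥0∞, Measurable f → Measurable g → Measurable h →
    (∀ x y, f x ^ s * g y ^ t ≤ h (s • x + t • y)) →
    (∫⁻ x, f x) ^ s * (∫⁻ x, g x) ^ t ≤ ∫⁻ x, h x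

lemma layer_cake {f : ℝ → ℝ≥0∞} (hf : Measurable f) (h1 : ∀ x, f x ≤ 1) :
    ∫⁻ x, f x = ∫⁻ r in Ioo (0 : ℝ) 1, volume {x | ENNReal.ofReal r < f x} := by
  have hfin : ∀ x, f x ≠ ∞ := fun x => ((h1 x).trans_lt ENNReal.one_lt_top).ne
  have e1 : ∫⁻ x, f x = ∫⁻ x, ENNReal.ofReal (f x).toReal := by
    simp only [ENNReal.ofReal_toReal (hfin _)]
  rw [e1, lintegral_eq_lintegral_meas_lt _ (Eventually.of_forall fun _ => ENNReal.toReal_nonneg)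
    hf.ennreal_toReal.aemeasurable]
  have e2 : Ioi (0 : ℝ) = Ioo 0 1 ∪ Ici 1 := by rw [Ioo_union_Ici_eq_Ioi one_pos]
  have e3 : Disjoint (Ioo (0 : ℝ) 1) (Ici 1) := by
    rw [Set.disjoint_left]; intro x hx hx'; exact absurd hx.2 (not_lt.2 hx')
  rw [e2, lintegral_union measurableSet_Ici e3]
  have e4 : ∫⁻ r in Ici (1 : ℝ), volume {a | r < (f a).toReal} = 0 := by
    rw [setLIntegral_congr_fun (g := fun _ => 0) measurableSet_Ici, lintegral_zero]
    intro r hr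
    have : {a | r < (f a).toReal} = ∅ := by
      ext a
      have := ENNReal.toReal_mono ENNReal.one_ne_top (h1 a)
      simp only [ENNReal.toReal_one] at this
      simpa using this.trans hr
    simp [this]
  rw [e4, add_zero]
  refine setLIntegral_congr_fun measurableSet_Ioo fun r hr => ?_
  simp only [ENNReal.ofReal_lt_iff_lt_toReal hr.1.le (hfin _)]

/-- The normalisation `sup f = sup g = 1` makes every superlevel set below height `1` nonempty, so
that the Brunn–Minkowski inequality applies level by level. -/
lemma pl_one_normalized {s t : ℝ} (hs : 0 < s) (ht : 0 < t) (hst : s + t = 1)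
    {f g h : ℝ → ℝ≥0∞} (hf : Measurable f) (hg : Measurable g) (hh : Measurable h)
    (hf1 : ⨆ x, f x = 1) (hg1 : ⨆ x, g x = 1)
    (H : ∀ x y, f x ^ s * g y ^ t ≤ h (s * x + t * y)) :
    (∫⁻ x, f x) ^ s * (∫⁻ x, g x) ^ t ≤ ∫⁻ x, h x := by
  have hf1' : ∀ x, f x ≤ 1 := fun x => hf1 ▸ le_iSup f x
  have hg1' : ∀ x, g x ≤ 1 := fun x => hg1 ▸ le_iSup g x
  have mf : ∀ u : ℝ → ℝ≥0∞, Measurable fun r : ℝ => volume {x | ENNReal.ofReal r < u x} := by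
    intro u
    refine Antitone.measurable fun a b hab => measure_mono fun x hx => ?_
    exact (ENNReal.ofReal_le_ofReal hab).trans_lt hx
  calc (∫⁻ x, f x) ^ s * (∫⁻ x, g x) ^ t
      ≤ ENNReal.ofReal s * (∫⁻ x, f x) + ENNReal.ofReal t * ∫⁻ x, g x :=
        ennreal_amgm hs ht hst _ _
    _ ≤ ∫⁻ x, min (h x) 1 := by
        rw [layer_cake hf hf1', layer_cake hg hg1',
          layer_cake (hh.min measurable_const) fun x => min_le_right _ _,
          ← lintegral_const_mul _ (mf f), ← lintegral_const_mul _ (mf g),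
          ← lintegral_add_left ((mf f).const_mul _)]
        refine setLIntegral_mono (mf _) fun r hr => ?_
        have hr1 : ENNReal.ofReal r < 1 := by
          rw [← ENNReal.ofReal_one]; exact (ENNReal.ofReal_lt_ofReal_iff one_pos).2 hr.2
        refine bm_one hs ht (measurableSet_lt measurable_const hf)
          (measurableSet_lt measurable_const hg) ?_ ?_ ?_
        · exact lt_iSup_iff.1 (hf1 ▸ hr1)
        · exact lt_iSup_iff.1 (hg1 ▸ hr1)
        · intro a ha b hb
          refine lt_min (lt_of_lt_of_le ?_ (H a b)) hr1
          calc ENNReal.ofReal r = ENNReal.ofReal r ^ s * ENNReal.ofReal r ^ t := by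
                rw [← ENNReal.rpow_add_of_nonneg _ _ hs.le ht.le, hst, ENNReal.rpow_one]
            _ < f a ^ s * g b ^ t :=
                ENNReal.mul_lt_mul (ENNReal.rpow_lt_rpow ha hs) (ENNReal.rpow_lt_rpow hb ht)
    _ ≤ ∫⁻ x, h x := lintegral_mono fun x => min_le_left _ _

lemma pl_one_bounded {s t : ℝ} (hs : 0 < s) (ht : 0 < t) (hst : s + t = 1)
    {f g h : ℝ → ℝ≥0∞} (hf : Measurable f) (hg : Measurable g) (hh : Measurable h)
    (hf1 : ⨆ x, f x ≠ ∞) (hg1 : ⨆ x, g x ≠ ∞)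
    (H : ∀ x y, f x ^ s * g y ^ t ≤ h (s * x + t * y)) :
    (∫⁻ x, f x) ^ s * (∫⁻ x, g x) ^ t ≤ ∫⁻ x, h x := by
  set M := ⨆ x, f x with hM
  set N := ⨆ x, g x with hN
  rcases eq_or_ne M 0 with hM0 | hM0
  · have : ∀ x, f x = 0 := by simpa [M] using hM0
    simp [this, hs]
  rcases eq_or_ne N 0 with hN0 | hN0
  · have : ∀ x, g x = 0 := by simpa [N] using hN0
    simp [this, ht]
  have key := pl_one_normalized hs ht hst (f := fun x => M⁻¹ * f x) (g := fun x => N⁻¹ * g x)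
    (h := fun x => (M⁻¹ ^ s * N⁻¹ ^ t) * h x) (hf.const_mul _) (hg.const_mul _) (hh.const_mul _)
    (by rw [← ENNReal.mul_iSup, ← hM, ENNReal.inv_mul_cancel hM0 hf1])
    (by rw [← ENNReal.mul_iSup, ← hN, ENNReal.inv_mul_cancel hN0 hg1])
    (fun x y => by
      rw [ENNReal.mul_rpow_of_nonneg _ _ hs.le, ENNReal.mul_rpow_of_nonneg _ _ ht.le,
        mul_mul_mul_comm]
      gcongr
      exact H x y)
  rw [lintegral_const_mul _ hf, lintegral_const_mul _ hg, lintegral_const_mul _ hh,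
    ENNReal.mul_rpow_of_nonneg _ _ hs.le, ENNReal.mul_rpow_of_nonneg _ _ ht.le,
    mul_mul_mul_comm] at key
  have c0 : M⁻¹ ^ s * N⁻¹ ^ t ≠ 0 := by
    simp [ENNReal.rpow_eq_zero_iff, hs, ht, hs.not_gt, ht.not_gt, hf1, hg1]
  have c1 : M⁻¹ ^ s * N⁻¹ ^ t ≠ ∞ := by
    refine ENNReal.mul_ne_top ?_ ?_ <;>
    simp [ENNReal.rpow_eq_top_iff, hs, ht, hs.not_gt, ht.not_gt, hM0, hN0]
  exact (ENNReal.mul_le_mul_iff_right c0 c1).1 key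

lemma tendsto_lintegral_min {E : Type*} [MeasureSpace E] {f : E → ℝ≥0∞} (hf : Measurable f) :
    Tendsto (fun k : ℕ => ∫⁻ x, min (f x) k) atTop (𝓝 (∫⁻ x, f x)) := by
  refine lintegral_tendsto_of_tendsto_of_monotone
    (fun k => (hf.min measurable_const).aemeasurable)
    (Eventually.of_forall fun x i j hij => min_le_min le_rfl (by exact_mod_cast hij))
    (Eventually.of_forall fun x => ?_)
  simpa using (tendsto_const_nhds (x := f x)).min ENNReal.tendsto_nat_nhds_top

/-- The one-dimensional Prékopa–Leindler inequality; the bounded case gives the general one by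
truncation and monotone convergence. -/
lemma prekopaLeindler_real {s t : ℝ} (hs : 0 < s) (ht : 0 < t) (hst : s + t = 1) :
    PrekopaLeindler ℝ s t := by
  intro f g h hf hg hh H
  rcases eq_or_ne (∫⁻ x, f x) 0 with hf0 | hf0
  · simp [hf0, hs]
  rcases eq_or_ne (∫⁻ x, g x) 0 with hg0 | hg0
  · simp [hg0, ht]
  have lim : Tendsto (fun k : ℕ => (∫⁻ x, min (f x) k) ^ s * (∫⁻ x, min (g x) k) ^ t) atTop
      (𝓝 ((∫⁻ x, f x) ^ s * (∫⁻ x, g x) ^ t)) := by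
    refine ENNReal.Tendsto.mul ((tendsto_lintegral_min hf).ennrpow_const s) (Or.inl ?_)
      ((tendsto_lintegral_min hg).ennrpow_const t) (Or.inl ?_)
    · simp [ENNReal.rpow_eq_zero_iff, hf0, hs.not_gt]
    · simp [ENNReal.rpow_eq_zero_iff, hg0, ht.not_gt]
  refine le_of_tendsto' lim fun k => ?_
  refine pl_one_bounded hs ht hst (hf.min measurable_const) (hg.min measurable_const) hh ?_ ?_ ?_
  · exact ((iSup_le fun x => min_le_right _ _).trans_lt (ENNReal.natCast_lt_top k)).ne
  · exact ((iSup_le fun x => min_le_right _ _).trans_lt (ENNReal.natCast_lt_top k)).ne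
  · intro x y
    refine le_trans ?_ (H x y)
    gcongr <;> exact min_le_left _ _

/-- The Prékopa–Leindler inequality tensorises: apply it to the fibres, then to the marginals. -/
lemma PrekopaLeindler.prod {E F : Type*} [AddCommGroup E] [Module ℝ E] [MeasureSpace E]
    [AddCommGroup F] [Module ℝ F] [MeasureSpace F] [SFinite (volume : Measure F)] {s t : ℝ}
    (hE : PrekopaLeindler E s t) (hF : PrekopaLeindler F s t) : PrekopaLeindler (E × F) s t := by
  intro f g h hf hg hh H
  simp only [Measure.volume_eq_prod]
  rw [lintegral_prod _ hf.aemeasurable, lintegral_prod _ hg.aemeasurable,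
    lintegral_prod _ hh.aemeasurable]
  refine hE _ _ _ hf.lintegral_prod_right' hg.lintegral_prod_right' hh.lintegral_prod_right' ?_
  intro x y
  exact hF _ _ _ (hf.comp measurable_prodMk_left) (hg.comp measurable_prodMk_left)
    (hh.comp measurable_prodMk_left) fun a b => H (x, a) (y, b)

/-- The Prékopa–Leindler inequality transfers along volume-preserving linear maps. -/
lemma PrekopaLeindler.transfer {E F : Type*} [AddCommGroup E] [Module ℝ E] [MeasureSpace E]
    [AddCommGroup F] [Module ℝ F] [MeasureSpace F] {s t : ℝ} (hE : PrekopaLeindler E s t)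
    (e : E → F) (he : MeasurePreserving e) (hlin : ∀ x y, e (s • x + t • y) = s • e x + t • e y) :
    PrekopaLeindler F s t := by
  intro f g h hf hg hh H
  rw [← he.lintegral_comp hf, ← he.lintegral_comp hg, ← he.lintegral_comp hh]
  refine hE _ _ _ (hf.comp he.measurable) (hg.comp he.measurable) (hh.comp he.measurable) ?_
  intro x y
  simpa [hlin] using H (e x) (e y)

lemma prekopaLeindler_pi {s t : ℝ} (hs : 0 < s) (ht : 0 < t) (hst : s + t = 1) (n : ℕ) :
    PrekopaLeindler (Fin n → ℝ) s t := by
  induction n with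
  | zero =>
    intro f g h hf hg hh H
    have := H 0 0
    have hv : (volume : Measure (Fin 0 → ℝ)) = Measure.dirac 0 := Measure.volume_pi_eq_dirac 0
    simpa [hv, Subsingleton.elim (s • (0 : Fin 0 → ℝ) + t • 0) 0] using this
  | succ n ih =>
    refine ((prekopaLeindler_real hs ht hst).prod ih).transfer _
      (volume_preserving_piFinSuccAbove (fun _ : Fin (n + 1) => ℝ) 0).symm ?_
    intro x y
    ext i
    refine Fin.cases ?_ (fun j => ?_) i <;>
      simp [MeasurableEquiv.piFinSuccAbove, Fin.insertNthEquiv]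

/-- The multiplicative Brunn–Minkowski inequality. -/
theorem brunn_minkowski {n : ℕ} {s t : ℝ} (hs : 0 < s) (ht : 0 < t) (hst : s + t = 1)
    {A B C : Set (EuclideanSpace ℝ (Fin n))} (hA : MeasurableSet A) (hB : MeasurableSet B)
    (hC : MeasurableSet C) (h : ∀ a ∈ A, ∀ b ∈ B, s • a + t • b ∈ C) :
    volume A ^ s * volume B ^ t ≤ volume C := by
  have pl : PrekopaLeindler (EuclideanSpace ℝ (Fin n)) s t :=
    (prekopaLeindler_pi hs ht hst n).transfer _ (PiLp.volume_preserving_toLp (Fin n))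
      fun x y => rfl
  have := pl (A.indicator 1) (B.indicator 1) (C.indicator 1) (measurable_one.indicator hA)
    (measurable_one.indicator hB) (measurable_one.indicator hC) ?_
  · simpa [lintegral_indicator_one, hA, hB, hC] using this
  · intro x y
    by_cases hx : x ∈ A
    · by_cases hy : y ∈ B
      · simp [hx, hy, h x hx y hy]
      · simp [hy, ht]
    · simp [hx, hs]

/-! ### The Milman–Pajor inequality -/

/-- A log-concave function that is bounded below near the origin lies below the exponential of an
affine function touching it at the origin: the hypograph of its logarithm has a supporting
hyperplane there, which is not vertical. -/
lemma exists_log_le {E : Type*} [NormedAddCommGroup E] [NormedSpace ℝ E] {f : E → ℝ}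
    (hlc : ∀ x y, 0 < f x → 0 < f y → ∀ s t : ℝ, 0 < s → 0 < t → s + t = 1 →
      f x ^ s * f y ^ t ≤ f (s • x + t • y))
    {r c : ℝ} (hr : 0 < r) (hc : 0 < c) (hlow : ∀ z ∈ ball (0 : E) r, c ≤ f z) :
    ∃ φ : E →L[ℝ] ℝ, ∀ z, 0 < f z → Real.log (f z) ≤ Real.log (f 0) + φ z := by
  set A : Set (E × ℝ) := {p | 0 < f p.1 ∧ p.2 ≤ Real.log (f p.1)} with hA
  have f0 : 0 < f 0 := hc.trans_le (hlow 0 (mem_ball_self hr))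
  have hconv : Convex ℝ A := by
    rw [convex_iff_forall_pos]
    rintro ⟨x, a⟩ ⟨hx, ha⟩ ⟨y, b⟩ ⟨hy, hb⟩ s t hs ht hst
    simp only at hx ha hy hb
    have h1 := hlc x y hx hy s t hs ht hst
    have h2 : 0 < f x ^ s * f y ^ t := by positivity
    refine ⟨h2.trans_le h1, ?_⟩
    have h3 := Real.log_le_log h2 h1
    rw [Real.log_mul (by positivity) (by positivity), Real.log_rpow hx, Real.log_rpow hy] at h3
    simp only [Prod.smul_mk, Prod.mk_add_mk, smul_eq_mul]
    nlinarith [mul_le_mul_of_nonneg_left ha hs.le, mul_le_mul_of_nonneg_left hb ht.le]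
  have hsub : ball (0 : E) r ×ˢ Iio (Real.log c) ⊆ A := by
    rintro ⟨z, a⟩ ⟨hz, ha⟩
    exact ⟨hc.trans_le (hlow z hz), (le_of_lt ha).trans (Real.log_le_log hc (hlow z hz))⟩
  have hint : (interior A).Nonempty :=
    ⟨(0, Real.log c - 1), interior_maximal hsub (isOpen_ball.prod isOpen_Iio)
      ⟨mem_ball_self hr, by simp⟩⟩
  have hnot : ((0 : E), Real.log (f 0)) ∉ interior A := by
    intro hmem
    have hcont : Continuous fun e : ℝ => ((0 : E), Real.log (f 0) + e) := by fun_prop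
    have : ∀ᶠ e : ℝ in 𝓝 0, ((0 : E), Real.log (f 0) + e) ∈ A :=
      hcont.continuousAt.eventually_mem (by simpa using mem_interior_iff_mem_nhds.1 hmem)
    obtain ⟨ε, hε, h⟩ := Metric.eventually_nhds_iff.1 this
    have := (h (y := ε / 2) (by simp [abs_of_pos hε, hε])).2
    simp only at this
    linarith
  obtain ⟨Λ, hΛ0, hΛ⟩ := geometric_hahn_banach_of_nonempty_interior_point hconv hnot hint
  set β := Λ (0, 1) with hβ
  set a : E →L[ℝ] ℝ := Λ.comp (ContinuousLinearMap.inl ℝ E ℝ) with ha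
  have hdec : ∀ z e, Λ (z, e) = a z + β * e := by
    intro z e
    have : ((z, e) : E × ℝ) = (z, 0) + e • ((0 : E), (1 : ℝ)) := by simp
    rw [this, map_add, map_smul]
    simp [a, β, mul_comm]
  have hineq : ∀ z, 0 < f z → ∀ e ≤ Real.log (f z), a z + β * e ≤ β * Real.log (f 0) := by
    intro z hz e he
    have := hΛ (z, e) ⟨hz, he⟩
    rwa [hdec, hdec, map_zero, zero_add] at this
  have hβ0 : 0 ≤ β := by
    have := hineq 0 f0 (Real.log (f 0) - 1) (by linarith)
    rw [map_zero] at this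
    linarith
  have hβpos : 0 < β := by
    refine lt_of_le_of_ne hβ0 fun h0 => hΛ0 ?_
    have hle : ∀ z ∈ ball (0 : E) r, a z ≤ 0 := fun z hz => by
      simpa [← h0] using hineq z (hc.trans_le (hlow z hz)) _ le_rfl
    have ha0 : a = 0 := by
      ext z
      have hcont : Continuous fun e : ℝ => e • z := by fun_prop
      have : ∀ᶠ e : ℝ in 𝓝 0, e • z ∈ ball (0 : E) r :=
        hcont.continuousAt.eventually_mem (by simpa using ball_mem_nhds (0 : E) hr)
      obtain ⟨ε, hε, h⟩ := Metric.eventually_nhds_iff.1 this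
      have h1 := hle _ (h (y := ε / 2) (by simp [abs_of_pos hε, hε]))
      have h2 := hle _ (h (y := -(ε / 2)) (by simp [abs_of_pos hε, hε]))
      simp only [map_smul, smul_eq_mul] at h1 h2
      simp only [zero_apply]
      nlinarith
    ext p <;> simp [hdec, ha0, ← h0]
  refine ⟨-(β⁻¹ • a), fun z hz => ?_⟩
  have := hineq z hz _ le_rfl
  have h2 : β⁻¹ * (a z + β * Real.log (f z)) ≤ β⁻¹ * (β * Real.log (f 0)) := by gcongr
  simp only [neg_apply, smul_apply, smul_eq_mul]
  rw [mul_add, inv_mul_cancel_left₀ hβpos.ne', inv_mul_cancel_left₀ hβpos.ne'] at h2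
  linarith

lemma setIntegral_functional {n : ℕ} {K : Set (EuclideanSpace ℝ (Fin n))} (hK : IsCompact K)
    (hb : ∫ x in K, x = 0) (φ : EuclideanSpace ℝ (Fin n) →L[ℝ] ℝ) : ∫ x in K, φ x = 0 := by
  have hid : IntegrableOn (fun x : EuclideanSpace ℝ (Fin n) => x) K :=
    continuous_id.continuousOn.integrableOn_compact hK
  rw [φ.integral_comp_comm hid, hb, map_zero]

/-- Otherwise a separating functional would be negative on `interior K` and yet have integral `0`
over `K`. -/
lemma zero_mem_interior {n : ℕ} {K : Set (EuclideanSpace ℝ (Fin n))} (hK : IsCompact K)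
    (hKc : Convex ℝ K) (hKi : (interior K).Nonempty) (hb : ∫ x in K, x = 0) :
    0 ∈ interior K := by
  by_contra h0
  obtain ⟨φ, hφ⟩ := geometric_hahn_banach_open_point hKc.interior isOpen_interior h0
  rw [map_zero] at hφ
  have hle : ∀ x ∈ K, φ x ≤ 0 := by
    intro x hx
    have hx' : x ∈ closure (interior K) := by
      rw [hKc.closure_interior_eq_closure_of_nonempty_interior hKi]
      exact subset_closure hx
    exact closure_minimal (t := {x | φ x ≤ 0}) (fun y hy => (hφ y hy).le)
      (isClosed_le φ.continuous continuous_const) hx'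
  have hint : IntegrableOn (fun x => -φ x) K :=
    φ.continuous.neg.continuousOn.integrableOn_compact hK
  have hpos : 0 < ∫ x in K, -φ x := by
    rw [setIntegral_pos_iff_support_of_nonneg_ae _ hint]
    · refine (isOpen_interior.measure_pos volume hKi).trans_le (measure_mono ?_)
      exact fun x hx => ⟨by simpa using (hφ x hx).ne, interior_subset hx⟩
    · filter_upwards [ae_restrict_mem hK.measurableSet] with x hx
      simpa using hle x hx
  rw [integral_neg, setIntegral_functional hK hb, neg_zero] at hpos
  exact lt_irrefl _ hpos

lemma integral_correlation {n : ℕ} {u v : EuclideanSpace ℝ (Fin n) → ℝ} (hu : Integrable u)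
    (hv : Integrable v) :
    Integrable (fun z => ∫ x, u x * v (x - z)) ∧
      ∫ z, ∫ x, u x * v (x - z) = (∫ x, u x) * ∫ x, v x := by
  have hv' : Integrable fun x => v (-x) := hv.comp_neg
  have e : (fun z => ∫ x, u x * v (x - z)) =
      MeasureTheory.convolution u (fun x => v (-x)) (ContinuousLinearMap.mul ℝ ℝ) volume := by
    ext z
    simp [MeasureTheory.convolution]
  rw [e]
  refine ⟨hu.integrable_convolution _ hv', ?_⟩
  rw [integral_convolution _ hu hv', integral_neg_eq_self v]
  rfl

/-- The volume of `K ∩ (z + L)`, with `z + L` written as a preimage. -/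
noncomputable def overlap {n : ℕ} (K L : Set (EuclideanSpace ℝ (Fin n)))
    (z : EuclideanSpace ℝ (Fin n)) : ℝ :=
  volume.real (K ∩ (fun x => x - z) ⁻¹' L)

lemma isCompact_overlap {n : ℕ} {K L : Set (EuclideanSpace ℝ (Fin n))} (hK : IsCompact K)
    (hL : IsCompact L) (z : EuclideanSpace ℝ (Fin n)) :
    IsCompact (K ∩ (fun x => x - z) ⁻¹' L) :=
  hK.inter_right (hL.isClosed.preimage (by fun_prop))

lemma overlap_logConcave {n : ℕ} {K L : Set (EuclideanSpace ℝ (Fin n))} (hK : IsCompact K)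
    (hL : IsCompact L) (hKc : Convex ℝ K) (hLc : Convex ℝ L) (z w : EuclideanSpace ℝ (Fin n))
    {s t : ℝ} (hs : 0 < s) (ht : 0 < t) (hst : s + t = 1) :
    overlap K L z ^ s * overlap K L w ^ t ≤ overlap K L (s • z + t • w) := by
  have := brunn_minkowski hs ht hst (isCompact_overlap hK hL z).measurableSet
    (isCompact_overlap hK hL w).measurableSet (isCompact_overlap hK hL (s • z + t • w)).measurableSet
    (fun a ha b hb => ⟨hKc ha.1 hb.1 hs.le ht.le hst, by
      have := hLc ha.2 hb.2 hs.le ht.le hst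
      rw [mem_preimage]
      convert this using 1
      module⟩)
  have := ENNReal.toReal_mono (isCompact_overlap hK hL (s • z + t • w)).measure_ne_top this
  rwa [ENNReal.toReal_mul, ← ENNReal.toReal_rpow, ← ENNReal.toReal_rpow] at this

lemma overlap_low {n : ℕ} {K L : Set (EuclideanSpace ℝ (Fin n))} (hK : IsCompact K)
    (hL : IsCompact L) (hK0 : 0 ∈ interior K) (hL0 : 0 ∈ interior L) :
    ∃ r > 0, ∃ c > 0, ∀ z ∈ ball 0 r, c ≤ overlap K L z := by
  obtain ⟨r, hr, hsub⟩ := Metric.mem_nhds_iff.1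
    (inter_mem (mem_interior_iff_mem_nhds.1 hK0) (mem_interior_iff_mem_nhds.1 hL0))
  refine ⟨r / 2, by positivity, volume.real (ball (0 : EuclideanSpace ℝ (Fin n)) (r / 2)),
    ENNReal.toReal_pos (measure_ball_pos _ _ (by positivity)).ne' measure_ball_lt_top.ne, ?_⟩
  intro z hz
  refine measureReal_mono ?_ (isCompact_overlap hK hL z).measure_ne_top
  intro x hx
  rw [mem_ball_zero_iff] at hx hz
  refine ⟨(hsub ?_).1, (hsub ?_).2⟩
  · rw [mem_ball_zero_iff]; linarith
  · rw [mem_ball_zero_iff]; linarith [norm_sub_le x z]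

lemma integral_overlap {n : ℕ} {K L : Set (EuclideanSpace ℝ (Fin n))} (hK : IsCompact K)
    (hL : IsCompact L) :
    Integrable (overlap K L) ∧ ∫ z, overlap K L z = volume.real K * volume.real L := by
  have hu : Integrable (K.indicator (1 : EuclideanSpace ℝ (Fin n) → ℝ)) :=
    (integrable_indicator_iff hK.measurableSet).2 (integrableOn_const hK.measure_ne_top)
  have hv : Integrable (L.indicator (1 : EuclideanSpace ℝ (Fin n) → ℝ)) :=
    (integrable_indicator_iff hL.measurableSet).2 (integrableOn_const hL.measure_ne_top)
  have e : overlap K L = fun z => ∫ x, K.indicator 1 x * L.indicator 1 (x - z) := by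
    ext z
    rw [overlap, ← integral_indicator_one (isCompact_overlap hK hL z).measurableSet,
      inter_indicator_one]
    rfl
  have := integral_correlation hu hv
  rw [integral_indicator_one hK.measurableSet, integral_indicator_one hL.measurableSet] at this
  rw [e]
  exact this

/-- The density `overlap K L` has barycentre `bar K - bar L`, which is zero here. -/
lemma integral_overlap_mul {n : ℕ} {K L : Set (EuclideanSpace ℝ (Fin n))} (hK : IsCompact K)
    (hL : IsCompact L) (hKb : ∫ x in K, x = 0) (hLb : ∫ x in L, x = 0)
    (φ : EuclideanSpace ℝ (Fin n) →L[ℝ] ℝ) :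
    Integrable (fun z => overlap K L z * φ z) ∧ ∫ z, overlap K L z * φ z = 0 := by
  have hφ : ∀ {S : Set (EuclideanSpace ℝ (Fin n))}, IsCompact S → ∫ x in S, x = 0 →
      ∫ x, S.indicator φ x = 0 := by
    intro S hS hb
    rw [integral_indicator hS.measurableSet, setIntegral_functional hS hb]
  have i1 : ∀ {S : Set (EuclideanSpace ℝ (Fin n))}, IsCompact S →
      Integrable (S.indicator (1 : EuclideanSpace ℝ (Fin n) → ℝ)) := fun hS =>
    (integrable_indicator_iff hS.measurableSet).2 (integrableOn_const hS.measure_ne_top)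
  have i2 : ∀ {S : Set (EuclideanSpace ℝ (Fin n))}, IsCompact S →
      Integrable (S.indicator φ) := fun hS =>
    (integrable_indicator_iff hS.measurableSet).2 (φ.continuous.continuousOn.integrableOn_compact hS)
  have c1 := integral_correlation (i2 hK) (i1 hL)
  have c2 := integral_correlation (i1 hK) (i2 hL)
  have e : (fun z => overlap K L z * φ z) = fun z =>
      (∫ x, K.indicator φ x * L.indicator 1 (x - z)) -
        ∫ x, K.indicator 1 x * L.indicator φ (x - z) := by
    ext z
    set S := K ∩ (fun x => x - z) ⁻¹' L with hS
    have hSc : IsCompact S := isCompact_overlap hK hL z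
    have e1 : (fun x => K.indicator φ x * L.indicator 1 (x - z)) = S.indicator φ := by
      ext x
      by_cases h1 : x ∈ K <;> by_cases h2 : x - z ∈ L <;> simp [S, h1, h2]
    have e2 : (fun x => K.indicator 1 x * L.indicator φ (x - z)) =
        S.indicator fun x => φ (x - z) := by
      ext x
      by_cases h1 : x ∈ K <;> by_cases h2 : x - z ∈ L <;> simp [S, h1, h2]
    rw [e1, e2, integral_indicator hSc.measurableSet, integral_indicator hSc.measurableSet,
      ← integral_sub]
    · simp [overlap, S]
    · exact φ.continuous.continuousOn.integrableOn_compact hSc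
    · exact (φ.continuous.comp (continuous_sub_right z)).continuousOn.integrableOn_compact hSc
  rw [e]
  refine ⟨c1.1.sub c2.1, ?_⟩
  rw [integral_sub c1.1 c2.1, c1.2, c2.2, hφ hK hKb, hφ hL hLb]
  simp

/-- **Milman–Pajor inequality**: `|K| |L| ≤ |K ∩ L| |D|` for convex bodies `K`, `L` with barycentre
`0` and a compact set `D` containing `K - L`.
With `f z = |K ∩ (z + L)|` and a supporting exponential `f ≤ f 0 * exp φ`, the inequality
`τ log τ ≥ τ - 1` gives `f - f 0 ≤ f φ` where `f > 0`, a subset of `D`, and `∫ f φ = 0`. -/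
theorem milman_pajor {n : ℕ} {K L D : Set (EuclideanSpace ℝ (Fin n))} (hK : IsCompact K)
    (hL : IsCompact L) (hKc : Convex ℝ K) (hLc : Convex ℝ L) (hKi : (interior K).Nonempty)
    (hLi : (interior L).Nonempty) (hKb : ∫ x in K, x = 0) (hLb : ∫ x in L, x = 0)
    (hD : IsCompact D) (hKL : ∀ x ∈ K, ∀ y ∈ L, x - y ∈ D) :
    volume.real K * volume.real L ≤ volume.real (K ∩ L) * volume.real D := by
  obtain ⟨r, hr, c, hc, hlow⟩ := overlap_low hK hL (zero_mem_interior hK hKc hKi hKb)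
    (zero_mem_interior hL hLc hLi hLb)
  obtain ⟨φ, hφ⟩ := exists_log_le
    (fun x y _ _ s t hs ht hst => overlap_logConcave hK hL hKc hLc x y hs ht hst) hr hc hlow
  have f0 : 0 < overlap K L 0 := hc.trans_le (hlow 0 (mem_ball_self hr))
  have e0 : overlap K L 0 = volume.real (K ∩ L) := by simp [overlap]
  have hpt : ∀ z, overlap K L z ≤ D.indicator (fun _ => overlap K L 0) z + overlap K L z * φ z := by
    intro z
    have hnn : 0 ≤ overlap K L z := measureReal_nonneg
    rcases hnn.eq_or_lt with h0 | hpos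
    · rw [← h0, zero_mul, add_zero]
      exact indicator_nonneg (fun _ _ => f0.le) z
    · have hz : z ∈ D := by
        have hne : (K ∩ (fun x => x - z) ⁻¹' L).Nonempty := by
          by_contra hemp
          rw [not_nonempty_iff_eq_empty] at hemp
          simp [overlap, hemp] at hpos
        obtain ⟨x, hx, hxz⟩ := hne
        simpa using hKL x hx _ hxz
      rw [indicator_of_mem hz]
      have h1 := hφ z hpos
      have h2 := Real.one_sub_inv_le_log_of_pos (div_pos hpos f0)
      rw [Real.log_div hpos.ne' f0.ne', inv_div] at h2
      have h3 : 1 - overlap K L 0 / overlap K L z ≤ φ z := by linarith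
      have h4 := mul_le_mul_of_nonneg_left h3 hnn
      rw [mul_sub, mul_div_cancel₀ _ hpos.ne'] at h4
      linarith
  have iD : Integrable (D.indicator fun _ => overlap K L 0) :=
    (integrable_indicator_iff hD.measurableSet).2 (integrableOn_const hD.measure_ne_top)
  obtain ⟨i1, I1⟩ := integral_overlap hK hL
  obtain ⟨i2, I2⟩ := integral_overlap_mul hK hL hKb hLb φ
  have := integral_mono i1 (iD.add i2) hpt
  simp only [Pi.add_apply] at this
  rw [integral_add iD i2, I1, I2, add_zero, integral_indicator_const _ hD.measurableSet, e0] at this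
  simpa [mul_comm] using this

/-! ### The Urysohn inequality -/

/-- The support function `u ↦ max_{x ∈ C} ⟪x, u⟫`. -/
noncomputable def supp {n : ℕ} (C : Set (EuclideanSpace ℝ (Fin n)))
    (u : EuclideanSpace ℝ (Fin n)) : ℝ :=
  sSup ((fun x => ⟪x, u⟫) '' C)

lemma continuous_supp {n : ℕ} {C : Set (EuclideanSpace ℝ (Fin n))} (hC : IsCompact C) :
    Continuous (supp C) :=
  hC.continuous_sSup (f := fun u x => ⟪x, u⟫) (by fun_prop)

lemma inner_le_supp {n : ℕ} {C : Set (EuclideanSpace ℝ (Fin n))} (hC : IsCompact C)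
    {x : EuclideanSpace ℝ (Fin n)} (hx : x ∈ C) (u : EuclideanSpace ℝ (Fin n)) :
    ⟪x, u⟫ ≤ supp C u :=
  le_csSup (hC.image (by fun_prop)).bddAbove ⟨x, hx, rfl⟩

lemma volume_ball_pos (n : ℕ) : 0 < volume.real (ball (0 : EuclideanSpace ℝ (Fin n)) 1) :=
  ENNReal.toReal_pos (measure_ball_pos _ _ one_pos).ne' measure_ball_lt_top.ne

lemma volRad_nonneg {n : ℕ} (K : Set (EuclideanSpace ℝ (Fin n))) : 0 ≤ volRad K := by
  unfold volRad; positivity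

lemma volRad_pow {n : ℕ} (hn : 0 < n) (K : Set (EuclideanSpace ℝ (Fin n))) :
    volRad K ^ n * volume.real (ball (0 : EuclideanSpace ℝ (Fin n)) 1) = volume.real K := by
  have h := volume_ball_pos n
  rw [volRad, Real.rpow_inv_natCast_pow (by positivity) hn.ne']
  exact div_mul_cancel₀ _ h.ne'

lemma volume_smul {n : ℕ} {r : ℝ} (hr : 0 ≤ r) (C : Set (EuclideanSpace ℝ (Fin n))) :
    volume (r • C) = ENNReal.ofReal (r ^ n) * volume C := by
  simp [Measure.addHaar_smul, abs_of_nonneg hr]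

/-- The Brunn–Minkowski inequality for `Bⁿ + t C` in its additive form: the two summands are
rescaled to the same volume before applying the multiplicative form. -/
lemma volume_ball_add_ge {n : ℕ} (hn : 0 < n) {C : Set (EuclideanSpace ℝ (Fin n))}
    (hC : IsCompact C) (hv : 0 < volRad C) {t : ℝ} (ht : 0 < t) :
    ENNReal.ofReal ((1 + t * volRad C) ^ n) * volume (ball (0 : EuclideanSpace ℝ (Fin n)) 1) ≤
      volume (ball (0 : EuclideanSpace ℝ (Fin n)) 1 + t • C) := by
  set v := volRad C with hvdef
  set q := 1 + t * v with hq
  have hq0 : 0 < q := by positivity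
  have hst : 1 / q + t * v / q = 1 := by field_simp; rfl
  have hB : volume ((q / v) • C) = volume (q • ball (0 : EuclideanSpace ℝ (Fin n)) 1) := by
    rw [volume_smul (by positivity), volume_smul hq0.le,
      ← ENNReal.ofReal_toReal hC.measure_ne_top,
      ← ENNReal.ofReal_toReal (measure_ball_lt_top (x := (0 : EuclideanSpace ℝ (Fin n)))).ne,
      ← ENNReal.ofReal_mul (by positivity), ← ENNReal.ofReal_mul (by positivity)]
    congr 1
    change _ * volume.real C = _ * volume.real (ball 0 1)
    rw [← volRad_pow hn C, ← hvdef, div_pow]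
    field_simp
  have := brunn_minkowski (s := 1 / q) (t := t * v / q) (by positivity) (by positivity) hst
    (A := q • ball 0 1) (B := (q / v) • C)
    (C := ball (0 : EuclideanSpace ℝ (Fin n)) 1 + t • C)
    (isOpen_ball.smul₀ hq0.ne').measurableSet (hC.smul _).measurableSet
    (isOpen_ball.add_right).measurableSet ?_
  · rwa [hB, ← ENNReal.rpow_add_of_nonneg _ _ (by positivity) (by positivity), hst,
      ENNReal.rpow_one, volume_smul hq0.le] at this
  · rintro _ ⟨a, ha, rfl⟩ _ ⟨b, hb, rfl⟩
    refine ⟨a, ha, t • b, ⟨b, hb, rfl⟩, ?_⟩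
    simp only [smul_smul]
    congr 2
    · field_simp; simp
    · field_simp

/-- Polar coordinates: in the direction `u` the set `Bⁿ + t C` extends at most to the radius
`1 + t h_C(u)`. -/
lemma volume_ball_add_le {n : ℕ} (hn : 0 < n) {C : Set (EuclideanSpace ℝ (Fin n))}
    (hC : IsCompact C) {t : ℝ} (ht : 0 < t)
    (hpos : ∀ u : sphere (0 : EuclideanSpace ℝ (Fin n)) 1, 0 < 1 + t * supp C u) :
    volume (ball (0 : EuclideanSpace ℝ (Fin n)) 1 + t • C) ≤
      ∫⁻ u : sphere (0 : EuclideanSpace ℝ (Fin n)) 1, ENNReal.ofReal ((1 + t * supp C u) ^ n / n)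
        ∂(volume : Measure (EuclideanSpace ℝ (Fin n))).toSphere := by
  have : Nonempty (Fin n) := ⟨⟨0, hn⟩⟩
  have : Nontrivial (EuclideanSpace ℝ (Fin n)) := inferInstance
  set S := ball (0 : EuclideanSpace ℝ (Fin n)) 1 + t • C with hS
  set P : Set (sphere (0 : EuclideanSpace ℝ (Fin n)) 1 × Ioi (0 : ℝ)) :=
    {p | (p.2 : ℝ) < 1 + t * supp C p.1} with hP
  have hPm : MeasurableSet P := by
    have hc := continuous_supp hC
    exact (isOpen_lt (by fun_prop) (by fun_prop)).measurableSet
  have hmp := (volume : Measure (EuclideanSpace ℝ (Fin n))).measurePreserving_homeomorphUnitSphereProd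
  have hsub : S ∩ {0}ᶜ ⊆ Subtype.val '' (homeomorphUnitSphereProd (EuclideanSpace ℝ (Fin n)) ⁻¹' P) := by
    rintro x ⟨hx, hx0⟩
    refine ⟨⟨x, hx0⟩, ?_, rfl⟩
    obtain ⟨b, hb, _, ⟨c, hc, rfl⟩, rfl⟩ := hx
    rw [mem_preimage]
    simp only [P, mem_ofPred_eq, homeomorphUnitSphereProd_apply_snd_coe,
      homeomorphUnitSphereProd_apply_fst_coe]
    set x := b + t • c with hx
    have hx0' : x ≠ 0 := hx0
    have hnx : 0 < ‖x‖ := norm_pos_iff.2 hx0'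
    set u := ‖x‖⁻¹ • x with hu
    have hu1 : ‖u‖ = 1 := by simp [u, norm_smul, hnx.ne']
    have e1 : ⟪x, u⟫ = ‖x‖ := by
      rw [hu, inner_smul_right, real_inner_self_eq_norm_sq]; field_simp
    have e2 : ⟪x, u⟫ = ⟪b, u⟫ + t * ⟪c, u⟫ := by
      conv_lhs => rw [hx]
      rw [inner_add_left, inner_smul_left]; simp
    have e3 : ⟪b, u⟫ < 1 := by
      have := real_inner_le_norm b u
      rw [hu1, mul_one] at this
      exact this.trans_lt (by simpa using hb)
    have e4 := mul_le_mul_of_nonneg_left (inner_le_supp hC hc u) ht.le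
    linarith
  calc volume S = volume (S ∩ {0}ᶜ) := by
        exact (measure_inter_conull (by simp)).symm
    _ ≤ volume (Subtype.val '' (homeomorphUnitSphereProd (EuclideanSpace ℝ (Fin n)) ⁻¹' P)) :=
        measure_mono hsub
    _ = (volume.toSphere.prod (Measure.volumeIoiPow (n - 1))) P := by
        rw [← comap_subtype_coe_apply (measurableSet_singleton _).compl,
          hmp.measure_preimage hPm.nullMeasurableSet]
        simp
    _ = ∫⁻ u, Measure.volumeIoiPow (n - 1) (Prod.mk u ⁻¹' P) ∂volume.toSphere :=
        Measure.prod_apply hPm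
    _ = _ := by
        refine lintegral_congr fun u => ?_
        have : Prod.mk u ⁻¹' P = Iio ⟨1 + t * supp C u, hpos u⟩ := by
          ext r; simp [P, ← Subtype.coe_lt_coe]
        rw [this, Measure.volumeIoiPow_apply_Iio]
        congr 1
        simp [Nat.sub_add_cancel hn, Nat.cast_pred hn]

lemma isProbabilityMeasure_sphereUniform {n : ℕ} (hn : 0 < n) :
    IsProbabilityMeasure (sphereUniform n) := by
  constructor
  rw [sphereUniform, Measure.smul_apply, smul_eq_mul]
  refine ENNReal.inv_mul_cancel ?_ (measure_ne_top _ _)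
  rw [Measure.toSphere_apply_univ]
  simp [hn.ne', (measure_ball_pos (volume : Measure (EuclideanSpace ℝ (Fin n))) 0 one_pos).ne']

lemma integral_sphereUniform {n : ℕ} (g : sphere (0 : EuclideanSpace ℝ (Fin n)) 1 → ℝ) :
    ∫ u, g u ∂(sphereUniform n) =
      (n * volume.real (ball (0 : EuclideanSpace ℝ (Fin n)) 1))⁻¹ *
        ∫ u, g u ∂(volume : Measure (EuclideanSpace ℝ (Fin n))).toSphere := by
  rw [sphereUniform, integral_smul_measure, Measure.toSphere_apply_univ]
  simp [Measure.real]

lemma one_add_pow_le_integral {n : ℕ} (hn : 0 < n) {C : Set (EuclideanSpace ℝ (Fin n))}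
    (hC : IsCompact C) (hv : 0 < volRad C) {t : ℝ} (ht : 0 < t)
    (hpos : ∀ u : sphere (0 : EuclideanSpace ℝ (Fin n)) 1, 0 < 1 + t * supp C u) :
    (1 + t * volRad C) ^ n ≤ ∫ u, (1 + t * supp C u) ^ n ∂(sphereUniform n) := by
  have h := (volume_ball_add_ge hn hC hv ht).trans (volume_ball_add_le hn hC ht hpos)
  have hc := continuous_supp hC
  have hcont : Continuous fun u : sphere (0 : EuclideanSpace ℝ (Fin n)) 1 =>
      (1 + t * supp C u) ^ n / n := by fun_prop
  have hint : Integrable (fun u : sphere (0 : EuclideanSpace ℝ (Fin n)) 1 =>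
      (1 + t * supp C u) ^ n / n) (volume : Measure (EuclideanSpace ℝ (Fin n))).toSphere :=
    hcont.integrable_of_hasCompactSupport (HasCompactSupport.of_compactSpace _)
  rw [← ofReal_integral_eq_lintegral_ofReal hint (Eventually.of_forall fun u => by
      have := hpos u; simp only [Pi.zero_apply]; positivity),
    ← ENNReal.ofReal_toReal (measure_ball_lt_top (x := (0 : EuclideanSpace ℝ (Fin n)))).ne,
    ← ENNReal.ofReal_mul (by positivity), ENNReal.ofReal_le_ofReal_iff
      (integral_nonneg fun u => by have := hpos u; simp only [Pi.zero_apply]; positivity),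
    integral_div] at h
  change _ * volume.real (ball 0 1) ≤ _ at h
  have hb := volume_ball_pos n
  have hn' : (0 : ℝ) < n := by exact_mod_cast hn
  rw [integral_sphereUniform, inv_mul_eq_div, le_div_iff₀ (by positivity)]
  rw [le_div_iff₀ hn'] at h
  linarith

/-- **Urysohn inequality**: compare the first-order terms in `t` of
`(1 + t vrad C)ⁿ ≤ ∫ (1 + t h_C)ⁿ dσ`. -/
theorem urysohn {n : ℕ} (hn : 0 < n) {C : Set (EuclideanSpace ℝ (Fin n))}
    (hC : IsCompact C) (hv : 0 < volRad C) : volRad C ≤ meanWidth C := by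
  have := isProbabilityMeasure_sphereUniform hn
  have hn' : (0 : ℝ) < n := by exact_mod_cast hn
  have hc := continuous_supp hC
  have hcs : Continuous fun u : sphere (0 : EuclideanSpace ℝ (Fin n)) 1 => supp C u := by fun_prop
  obtain ⟨H₀, hH₀⟩ := isCompact_univ.exists_bound_of_continuousOn hcs.continuousOn
  set H := max H₀ 1 with hHdef
  have hH1 : 1 ≤ H := le_max_right _ _
  have hH : ∀ u : sphere (0 : EuclideanSpace ℝ (Fin n)) 1, |supp C u| ≤ H := fun u =>
    (hH₀ u (mem_univ _)).trans (le_max_left _ _)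
  have hint : ∀ g : sphere (0 : EuclideanSpace ℝ (Fin n)) 1 → ℝ, Continuous g →
      Integrable g (sphereUniform n) := fun g hg =>
    hg.integrable_of_hasCompactSupport (HasCompactSupport.of_compactSpace _)
  have hw : meanWidth C = ∫ u : sphere (0 : EuclideanSpace ℝ (Fin n)) 1, supp C u
    ∂(sphereUniform n) := rfl
  -- It suffices to bound `vrad C - w(C)` by `O(t)` for all small `t`.
  have key : ∀ t : ℝ, 0 < t → t * (2 * n * H) ≤ 1 → volRad C ≤ meanWidth C + t * (n * H ^ 2) := by
    intro t ht htH
    have hn1 : (1 : ℝ) ≤ n := by exact_mod_cast hn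
    have htu : ∀ u : sphere (0 : EuclideanSpace ℝ (Fin n)) 1, |t * supp C u| ≤ t * H := fun u => by
      rw [abs_mul, abs_of_pos ht]; exact mul_le_mul_of_nonneg_left (hH u) ht.le
    have htH0 : 0 ≤ t * H := by positivity
    have htH2 : t * H ≤ n * (t * H) := le_mul_of_one_le_left htH0 hn1
    have hpos : ∀ u : sphere (0 : EuclideanSpace ℝ (Fin n)) 1, 0 < 1 + t * supp C u := fun u => by
      have := (abs_le.1 (htu u)).1
      nlinarith
    have h1 := one_add_pow_le_integral hn hC hv ht hpos
    have h2 : 1 + n * (t * volRad C) ≤ (1 + t * volRad C) ^ n :=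
      one_add_mul_le_pow (by nlinarith [mul_pos ht hv]) n
    have h3 : ∀ u : sphere (0 : EuclideanSpace ℝ (Fin n)) 1,
        (1 + t * supp C u) ^ n ≤ 1 + n * t * supp C u + (n * t * H) ^ 2 := by
      intro u
      have a1 : (1 + t * supp C u) ^ n ≤ Real.exp (n * (t * supp C u)) := by
        rw [Real.exp_nat_mul]
        exact pow_le_pow_left₀ (hpos u).le (by linarith [Real.add_one_le_exp (t * supp C u)]) n
      have a3 : |n * (t * supp C u)| ≤ n * t * H := by
        rw [abs_mul, abs_of_pos hn', mul_assoc]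
        exact mul_le_mul_of_nonneg_left (htu u) hn'.le
      have a4 := Real.abs_exp_sub_one_sub_id_le (x := n * (t * supp C u)) (by nlinarith)
      have a5 := (abs_le.1 a4).2
      have a6 : (n * (t * supp C u)) ^ 2 ≤ (n * t * H) ^ 2 := sq_le_sq.2 (a3.trans (le_abs_self _))
      linarith
    have h4 : ∫ u, (1 + t * supp C u) ^ n ∂(sphereUniform n) ≤
        ∫ u : sphere (0 : EuclideanSpace ℝ (Fin n)) 1,
          (1 + n * t * supp C u + (n * t * H) ^ 2) ∂(sphereUniform n) :=
      integral_mono (hint _ (by fun_prop)) (hint _ (by fun_prop)) h3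
    rw [integral_add (hint _ (by fun_prop)) (hint _ (by fun_prop)),
      integral_add (hint _ (by fun_prop)) (hint _ (by fun_prop)), integral_const_mul, ← hw] at h4
    simp only [integral_const, probReal_univ, one_smul] at h4
    have h5 : n * t * volRad C ≤ n * t * (meanWidth C + t * (n * H ^ 2)) := by
      nlinarith
    exact le_of_mul_le_mul_left h5 (by positivity)
  have lim : Tendsto (fun t : ℝ => meanWidth C + t * (n * H ^ 2)) (𝓝[>] 0) (𝓝 (meanWidth C)) := by
    have : Tendsto (fun t : ℝ => meanWidth C + t * (n * H ^ 2)) (𝓝 0)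
        (𝓝 (meanWidth C + 0 * (n * H ^ 2))) := Continuous.tendsto (by fun_prop) 0
    rw [zero_mul, add_zero] at this
    exact this.mono_left nhdsWithin_le_nhds
  refine ge_of_tendsto lim ?_
  have hev : ∀ᶠ t : ℝ in 𝓝 0, t * (2 * n * H) < 1 := by
    have hcont : Continuous fun t : ℝ => t * (2 * n * H) := by fun_prop
    exact hcont.continuousAt.eventually_lt continuousAt_const (by simp)
  filter_upwards [nhdsWithin_le_nhds hev, self_mem_nhdsWithin] with t h1 h2
  exact key t h2 h1.le

/-- The uniform measure on the sphere is invariant under orthogonal transformations. -/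
lemma integral_sphere_comp {n : ℕ} (T : EuclideanSpace ℝ (Fin n) ≃ₗᵢ[ℝ] EuclideanSpace ℝ (Fin n))
    {g : EuclideanSpace ℝ (Fin n) → ℝ} (hg : Continuous g) :
    ∫ u : sphere (0 : EuclideanSpace ℝ (Fin n)) 1, g (T u) ∂(sphereUniform n) =
      ∫ u : sphere (0 : EuclideanSpace ℝ (Fin n)) 1, g u ∂(sphereUniform n) := by
  set F : sphere (0 : EuclideanSpace ℝ (Fin n)) 1 → sphere (0 : EuclideanSpace ℝ (Fin n)) 1 :=
    fun u => ⟨T u, by simp⟩ with hF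
  have hFc : Continuous F := by
    have := T.continuous
    exact Continuous.subtype_mk (by fun_prop) _
  have hmap : Measure.map F (volume : Measure (EuclideanSpace ℝ (Fin n))).toSphere =
      (volume : Measure (EuclideanSpace ℝ (Fin n))).toSphere := by
    ext s hs
    rw [Measure.map_apply hFc.measurable hs, Measure.toSphere_apply' _ (hFc.measurable hs),
      Measure.toSphere_apply' _ hs]
    have hset : Ioo (0 : ℝ) 1 • ((↑) '' (F ⁻¹' s) : Set (EuclideanSpace ℝ (Fin n))) =
        T ⁻¹' (Ioo (0 : ℝ) 1 • ((↑) '' s : Set (EuclideanSpace ℝ (Fin n)))) := by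
      ext x
      simp only [Set.mem_smul, mem_preimage]
      constructor
      · rintro ⟨r, hr, _, ⟨u, hu, rfl⟩, rfl⟩
        exact ⟨r, hr, _, ⟨F u, hu, rfl⟩, by simp [F]⟩
      · rintro ⟨r, hr, _, ⟨u, hu, rfl⟩, h⟩
        refine ⟨r, hr, T.symm u, ⟨⟨T.symm u, by simp⟩, by simpa [F] using hu, rfl⟩, ?_⟩
        rw [← map_smul, h, T.symm_apply_apply]
    rw [hset]
    congr 1
    exact T.measurePreserving.measure_preimage_emb T.toMeasurableEquiv.measurableEmbedding _
  rw [integral_sphereUniform, integral_sphereUniform]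
  congr 1
  conv_rhs => rw [← hmap]
  rw [integral_map hFc.measurable.aemeasurable]
  exact (hg.comp continuous_subtype_val).aestronglyMeasurable

/-! ### The inequalities for `K` and `θ(K)` -/

lemma volume_image_isometry {n : ℕ}
    (θ : EuclideanSpace ℝ (Fin n) ≃ₗᵢ[ℝ] EuclideanSpace ℝ (Fin n))
    (K : Set (EuclideanSpace ℝ (Fin n))) : volume (θ '' K) = volume K := by
  have h := θ.measurePreserving.measure_preimage_emb θ.toMeasurableEquiv.measurableEmbedding
    (θ '' K)
  rw [← h, preimage_image_eq _ θ.injective]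

lemma volRad_image_isometry {n : ℕ}
    (θ : EuclideanSpace ℝ (Fin n) ≃ₗᵢ[ℝ] EuclideanSpace ℝ (Fin n))
    (K : Set (EuclideanSpace ℝ (Fin n))) : volRad (θ '' K) = volRad K := by
  rw [volRad, volRad, volume_image_isometry]

lemma volume_real_pos {n : ℕ} {K : Set (EuclideanSpace ℝ (Fin n))} (hK : IsCompact K)
    (hKi : (interior K).Nonempty) : 0 < volume.real K :=
  ENNReal.toReal_pos (Measure.measure_pos_of_nonempty_interior _ hKi).ne' hK.measure_ne_top

lemma volRad_pos {n : ℕ} {K : Set (EuclideanSpace ℝ (Fin n))} (hK : IsCompact K)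
    (hKi : (interior K).Nonempty) : 0 < volRad K :=
  Real.rpow_pos_of_pos (div_pos (volume_real_pos hK hKi) (volume_ball_pos n)) _

lemma integral_eq_zero_of_center {n : ℕ} {K : Set (EuclideanSpace ℝ (Fin n))} (hK : IsCompact K)
    (hKi : (interior K).Nonempty) (hc : centerOfMass K = 0) : ∫ x in K, x = 0 :=
  (smul_eq_zero.1 hc).resolve_left (inv_ne_zero (volume_real_pos hK hKi).ne')

lemma integral_image_isometry {n : ℕ}
    (θ : EuclideanSpace ℝ (Fin n) ≃ₗᵢ[ℝ] EuclideanSpace ℝ (Fin n))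
    {K : Set (EuclideanSpace ℝ (Fin n))} (hb : ∫ x in K, x = 0) : ∫ x in θ '' K, x = 0 := by
  rw [θ.measurePreserving.setIntegral_image_emb θ.toMeasurableEquiv.measurableEmbedding
    (fun x => x) K]
  have h := θ.toContinuousLinearEquiv.integral_comp_comm (μ := volume.restrict K) (fun x => x)
  rw [hb, map_zero] at h
  exact h

/-- The Milman–Pajor inequality for `K` and `θ(K)`, in terms of volume radii. -/
lemma volRad_sq_le {n : ℕ} (hn : 0 < n) {K D : Set (EuclideanSpace ℝ (Fin n))}
    (hK : IsCompact K) (hKc : Convex ℝ K) (hKi : (interior K).Nonempty)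
    (hc : centerOfMass K = 0)
    (θ : EuclideanSpace ℝ (Fin n) ≃ₗᵢ[ℝ] EuclideanSpace ℝ (Fin n))
    (hD : IsCompact D) (hKD : ∀ x ∈ K, ∀ y ∈ θ '' K, x - y ∈ D) :
    volRad K ^ 2 ≤ volRad (K ∩ θ '' K) * volRad D := by
  have hb := integral_eq_zero_of_center hK hKi hc
  have hLi : (interior (θ '' K)).Nonempty := by
    have := θ.toHomeomorph.image_interior K
    exact (this : θ '' interior K = interior (θ '' K)) ▸ hKi.image _
  have h := milman_pajor hK (hK.image θ.continuous) hKc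
    (hKc.linear_image θ.toLinearEquiv.toLinearMap) hKi hLi hb (integral_image_isometry θ hb) hD hKD
  have hB := volume_ball_pos n
  rw [← volRad_pow hn K, ← volRad_pow hn (θ '' K), ← volRad_pow hn (K ∩ θ '' K),
    ← volRad_pow hn D, volRad_image_isometry] at h
  have h2 : (volRad K ^ 2) ^ n ≤ (volRad (K ∩ θ '' K) * volRad D) ^ n := by
    refine le_of_mul_le_mul_right (a := volume.real (ball (0 : EuclideanSpace ℝ (Fin n)) 1) ^ 2)
      ?_ (by positivity)
    rw [mul_pow, ← pow_mul, mul_comm 2 n, pow_mul]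
    linarith
  exact le_of_pow_le_pow_left₀ hn.ne' (mul_nonneg (volRad_nonneg _) (volRad_nonneg _)) h2

lemma volRad_two_smul {n : ℕ} (hn : 0 < n) (K : Set (EuclideanSpace ℝ (Fin n))) :
    volRad ((2 : ℝ) • K) = 2 * volRad K := by
  rw [volRad, volRad, volume_smul (by norm_num), ENNReal.toReal_mul,
    ENNReal.toReal_ofReal (by positivity), mul_div_assoc,
    Real.mul_rpow (by positivity) (by positivity), Real.pow_rpow_inv_natCast (by norm_num) hn.ne']

lemma isCompact_sub {n : ℕ} {K L : Set (EuclideanSpace ℝ (Fin n))} (hK : IsCompact K)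
    (hL : IsCompact L) : IsCompact (K - L) := by
  rw [sub_eq_add_neg]
  exact hK.add hL.neg

/-- `w(K - θ(K)) ≤ 2 w(K)`, by rotation invariance of the uniform measure on the sphere. -/
lemma meanWidth_sub_le {n : ℕ} (hn : 0 < n) {K : Set (EuclideanSpace ℝ (Fin n))}
    (hK : IsCompact K) (hne : K.Nonempty)
    (θ : EuclideanSpace ℝ (Fin n) ≃ₗᵢ[ℝ] EuclideanSpace ℝ (Fin n)) :
    meanWidth (K - θ '' K) ≤ 2 * meanWidth K := by
  have := isProbabilityMeasure_sphereUniform hn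
  set T := θ.symm.trans (LinearIsometryEquiv.neg ℝ) with hT
  have hcT := T.continuous
  have hc := continuous_supp hK
  have hcD := continuous_supp (isCompact_sub hK (hK.image θ.continuous))
  have hint : ∀ g : sphere (0 : EuclideanSpace ℝ (Fin n)) 1 → ℝ, Continuous g →
      Integrable g (sphereUniform n) := fun g hg =>
    hg.integrable_of_hasCompactSupport (HasCompactSupport.of_compactSpace _)
  have hle : ∀ u, supp (K - θ '' K) u ≤ supp K u + supp K (T u) := by
    intro u
    refine csSup_le ((hne.sub (hne.image _)).image _) ?_
    rintro _ ⟨_, ⟨x, hx, _, ⟨y, hy, rfl⟩, rfl⟩, rfl⟩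
    have h1 := inner_le_supp hK hx u
    have h2 := inner_le_supp hK hy (T u)
    have h3 : ⟪y, T u⟫ = -⟪θ y, u⟫ := by
      have := θ.inner_map_map y (θ.symm u)
      rw [θ.apply_symm_apply] at this
      rw [this]
      simp [T]
    simp only [inner_sub_left]
    linarith
  calc meanWidth (K - θ '' K)
      = ∫ u : sphere (0 : EuclideanSpace ℝ (Fin n)) 1, supp (K - θ '' K) u ∂(sphereUniform n) := rfl
    _ ≤ ∫ u : sphere (0 : EuclideanSpace ℝ (Fin n)) 1, (supp K u + supp K (T u))
          ∂(sphereUniform n) :=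
        integral_mono (hint _ (by fun_prop)) (hint _ (by fun_prop)) fun u => hle u
    _ = meanWidth K + meanWidth K := by
        rw [integral_add (hint _ (by fun_prop)) (hint _ (by fun_prop)), integral_sphere_comp T hc]
        rfl
    _ = 2 * meanWidth K := by ring

end MilmanPajor

/-- If `K ⊆ ℝ^n` is a convex body with center of mass at the origin,
then `vrad(K ∩ (−K)) ≥ vrad(K)/2`, and for every orthogonal transformation `θ`,
`vrad(K ∩ θ(K)) ≥ vrad(K)² / (2 w(K))`. -/
theorem milman_pajor_corollary (n : ℕ) (hn : 0 < n)
    (K : Set (EuclideanSpace ℝ (Fin n)))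
    (hKcompact : IsCompact K) (hKconv : Convex ℝ K) (hKint : (interior K).Nonempty)
    (hcenter : centerOfMass K = 0) :
    (1 / 2) * volRad K ≤ volRad (K ∩ (-K)) ∧
    ∀ θ : EuclideanSpace ℝ (Fin n) ≃ₗᵢ[ℝ] EuclideanSpace ℝ (Fin n),
      (1 / 2) * (volRad K ^ 2 / meanWidth K) ≤ volRad (K ∩ (θ '' K)) := by
  have hv := MilmanPajor.volRad_pos hKcompact hKint
  constructor
  · have himg : LinearIsometryEquiv.neg ℝ '' K = -K := by
      ext x; simp
    -- By convexity `K - (-K) = K + K ⊆ 2 K`.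
    have h := MilmanPajor.volRad_sq_le hn hKcompact hKconv hKint hcenter
      (LinearIsometryEquiv.neg ℝ) (hKcompact.smul (2 : ℝ)) (by
        rintro x hx _ ⟨y, hy, rfl⟩
        refine ⟨(1 / 2 : ℝ) • x + (1 / 2 : ℝ) • y,
          hKconv hx hy (by norm_num) (by norm_num) (by norm_num), ?_⟩
        simp [smul_smul])
    rw [himg, MilmanPajor.volRad_two_smul hn] at h
    refine le_of_mul_le_mul_right (a := volRad K) ?_ hv
    linarith
  · intro θ
    have hD : IsCompact (K - θ '' K) :=
      MilmanPajor.isCompact_sub hKcompact (hKcompact.image θ.continuous)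
    have h := MilmanPajor.volRad_sq_le hn hKcompact hKconv hKint hcenter θ hD
      fun x hx y hy => Set.sub_mem_sub hx hy
    have hI := MilmanPajor.volRad_nonneg (K ∩ θ '' K)
    have hDpos : 0 < volRad (K - θ '' K) :=
      pos_of_mul_pos_right ((pow_pos hv 2).trans_le h) hI
    have hw := (MilmanPajor.urysohn hn hD hDpos).trans
      (MilmanPajor.meanWidth_sub_le hn hKcompact (hKint.mono interior_subset) θ)
    have hwpos : 0 < meanWidth K := by linarith
    have h2 := h.trans (mul_le_mul_of_nonneg_left hw hI)
    rw [one_div, inv_mul_le_iff₀ two_pos, div_le_iff₀ hwpos]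
    linarith
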